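/- For every integer k ≥ 1, the sum of (−1)^{e(G)} over all connected simple graphs G on the vertex set Fin k equals (−1)^{k−1} · (k−1)!, where e(G) is the number of edges of G. -/

import Mathlib

open scoped Classical

/-!
Whitney's expansion of the chromatic polynomial of a graph `H` sums `(-1) ^ e(G) * X ^ c(G)` over
the spanning subgraphs `G ≤ H`, where `c(G)` counts connected components. At `X = q` the factor
`q ^ c(G)` counts the colourings `f` for which every edge of `G` is monochromatic. Exchanging the
sums leaves, for each `f`, the signed number of subgraphs of the monochromatic part of `H`, which
vanishes unless `f` is proper. The connected subgraphs are exactly those contributing to the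
coefficient of `X`. The complete graph on `n` vertices has chromatic polynomial
`X (X - 1) ⋯ (X - n + 1)`, whose coefficient of `X` is `(-1) ^ (n - 1) * (n - 1)!`.
-/

open Finset Polynomial SimpleGraph

variable {V W : Type*}

section MonochromaticGraph

/-- The graph joining any two distinct vertices of the same colour. A graph lies below it when all
its edges are monochromatic, and is disjoint from it when the colouring is proper. -/
def monochromaticGraph (f : V → W) : SimpleGraph V where
  Adj u v := u ≠ v ∧ f u = f v
  symm := ⟨fun _ _ h => ⟨h.1.symm, h.2.symm⟩⟩
  loopless := ⟨fun _ h => h.1 rfl⟩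

lemma le_monochromaticGraph_iff {G : SimpleGraph V} {f : V → W} :
    G ≤ monochromaticGraph f ↔ ∀ u v, G.Adj u v → f u = f v :=
  ⟨fun h _ _ huv => (h huv).2, fun h _ _ huv => ⟨huv.ne, h _ _ huv⟩⟩

lemma disjoint_monochromaticGraph_iff {H : SimpleGraph V} {f : V → W} :
    Disjoint H (monochromaticGraph f) ↔ ∀ u v, H.Adj u v → f u ≠ f v := by
  rw [SimpleGraph.disjoint_left]
  exact ⟨fun h u v huv hf => h u v huv ⟨huv.ne, hf⟩, fun h u v huv hm => h u v huv hm.2⟩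

lemma eq_of_reachable_of_le_monochromaticGraph {G : SimpleGraph V} {f : V → W}
    (hf : G ≤ monochromaticGraph f) {u v : V} (huv : G.Reachable u v) : f u = f v := by
  obtain ⟨p⟩ := huv
  induction p with
  | nil => rfl
  | cons hadj _ ih => exact (hf hadj).2.trans ih

/-- The colourings making every edge of `G` monochromatic are the colourings of the connected
components of `G`. -/
def leMonochromaticGraphEquiv (G : SimpleGraph V) :
    {f : V → W // G ≤ monochromaticGraph f} ≃ (G.ConnectedComponent → W) where
  toFun f := ConnectedComponent.lift f.1 fun _ _ p _ =>
    eq_of_reachable_of_le_monochromaticGraph f.2 p.reachable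
  invFun g := ⟨g ∘ G.connectedComponentMk, le_monochromaticGraph_iff.2 fun _ _ huv =>
    congrArg g (ConnectedComponent.connectedComponentMk_eq_of_adj huv)⟩
  left_inv _ := rfl
  right_inv _ := funext <| ConnectedComponent.ind fun _ => rfl

/-- Proper colourings of `H`, as plain functions, are the bundled colourings of Mathlib. -/
def disjointMonochromaticGraphEquiv (H : SimpleGraph V) :
    {f : V → W // Disjoint H (monochromaticGraph f)} ≃ H.Coloring W where
  toFun f := Coloring.mk f.1 fun {u v} => disjoint_monochromaticGraph_iff.1 f.2 u v
  invFun C := ⟨C, disjoint_monochromaticGraph_iff.2 fun _ _ huv => C.valid huv⟩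
  left_inv _ := rfl
  right_inv _ := rfl

lemma card_filter_le_monochromaticGraph [Fintype V] [Fintype W] (G : SimpleGraph V) :
    #{f : V → W | G ≤ monochromaticGraph f} =
      Fintype.card W ^ Nat.card G.ConnectedComponent := by
  rw [← Fintype.card_subtype, ← Nat.card_eq_fintype_card,
    Nat.card_congr (leMonochromaticGraphEquiv G), Nat.card_fun, Nat.card_eq_fintype_card]

lemma card_filter_disjoint_monochromaticGraph [Fintype V] [Fintype W] (H : SimpleGraph V) :
    #{f : V → W | Disjoint H (monochromaticGraph f)} = Nat.card (H.Coloring W) := by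
  rw [← Fintype.card_subtype, ← Nat.card_eq_fintype_card,
    Nat.card_congr (disjointMonochromaticGraphEquiv H)]

end MonochromaticGraph

lemma connected_iff_card_connectedComponent_eq_one {G : SimpleGraph V} :
    G.Connected ↔ Nat.card G.ConnectedComponent = 1 := by
  rw [Nat.card_eq_one_iff_unique]
  constructor
  · intro hG
    have := hG.nonempty
    exact ⟨hG.preconnected.subsingleton_connectedComponent, inferInstance⟩
  · rintro ⟨hsub, ⟨c⟩⟩
    have : Nonempty V := c.nonempty_supp.to_type
    exact ⟨fun _ _ => ConnectedComponent.exact (Subsingleton.elim _ _)⟩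

lemma card_coloring_top [Fintype V] [Fintype W] :
    Nat.card ((⊤ : SimpleGraph V).Coloring W) =
      (Fintype.card W).descFactorial (Fintype.card V) := by
  let e : (⊤ : SimpleGraph V).Coloring W ≃ (V ↪ W) :=
    { toFun := fun C => ⟨C, Hom.injective_of_top_hom C⟩
      invFun := fun f => (SimpleGraph.Embedding.completeGraph f).toHom
      left_inv := fun _ => rfl
      right_inv := fun _ => rfl }
  rw [Nat.card_congr e, Nat.card_eq_fintype_card, Fintype.card_embedding_eq]

lemma coeff_one_descPochhammer_succ (n : ℕ) :
    (descPochhammer ℤ (n + 1)).coeff 1 = (-1) ^ n * (n.factorial : ℤ) := by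
  have heval : (descPochhammer ℤ n).eval (-1) = (-1) ^ n * (n.factorial : ℤ) := by
    have h := ascPochhammer_eval_neg_eq_descPochhammer ℤ (-1) n
    rw [neg_neg, ascPochhammer_eval_one] at h
    rw [h, ← mul_assoc, ← mul_pow, neg_one_mul, neg_neg, one_pow, one_mul]
  rw [descPochhammer_succ_left, coeff_X_mul, coeff_zero_eq_eval_zero, eval_comp, eval_sub,
    eval_X, eval_one, zero_sub, heval]

section ChromaticPolynomial

variable [Fintype V]

lemma image_edgeFinset_filter_le (H : SimpleGraph V) :
    image (fun G : SimpleGraph V => G.edgeFinset) {G | G ≤ H} = H.edgeFinset.powerset := by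
  ext s
  simp only [mem_image, mem_filter_univ, mem_powerset]
  constructor
  · rintro ⟨G, hG, rfl⟩
    exact edgeFinset_mono hG
  · intro hs
    have hsH : (s : Set (Sym2 V)) ⊆ H.edgeSet := by simpa only [← coe_edgeFinset, coe_subset]
    have hdiag : Disjoint (s : Set (Sym2 V)) Sym2.diagSet :=
      Set.disjoint_left.2 fun _ he => H.not_isDiag_of_mem_edgeSet (hsH he)
    refine ⟨fromEdgeSet s, ?_, ?_⟩
    · exact (fromEdgeSet_mono hsH).trans_eq (fromEdgeSet_edgeSet H)
    · rw [← coe_inj, coe_edgeFinset, edgeSet_fromEdgeSet, hdiag.sdiff_eq_left]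

lemma sum_neg_one_pow_card_edgeSet_of_le (H : SimpleGraph V) :
    ∑ G : SimpleGraph V with G ≤ H, (-1 : ℤ) ^ Nat.card G.edgeSet = if H = ⊥ then 1 else 0 := by
  calc ∑ G : SimpleGraph V with G ≤ H, (-1 : ℤ) ^ Nat.card G.edgeSet
      = ∑ G : SimpleGraph V with G ≤ H, (-1 : ℤ) ^ #G.edgeFinset := by
        simp only [Nat.card_eq_fintype_card, edgeFinset_card]
    _ = ∑ s ∈ H.edgeFinset.powerset, (-1 : ℤ) ^ #s := by
        rw [← image_edgeFinset_filter_le, sum_image fun _ _ _ _ => edgeFinset_inj.1]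
    _ = if H = ⊥ then 1 else 0 := by
        simp only [sum_powerset_neg_one_pow_card, edgeFinset_eq_empty]

/-- The chromatic polynomial of a finite graph, encoded by Whitney's expansion over spanning
subgraphs; `eval_chromaticPolynomial` says that it counts proper colourings. -/
noncomputable def chromaticPolynomial (H : SimpleGraph V) : ℤ[X] :=
  ∑ G : SimpleGraph V with G ≤ H,
    monomial (Nat.card G.ConnectedComponent) ((-1) ^ Nat.card G.edgeSet)

lemma eval_chromaticPolynomial [Fintype W] (H : SimpleGraph V) :
    (chromaticPolynomial H).eval (Fintype.card W : ℤ) = Nat.card (H.Coloring W) := by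
  calc (chromaticPolynomial H).eval (Fintype.card W : ℤ)
      = ∑ G : SimpleGraph V with G ≤ H,
          (-1) ^ Nat.card G.edgeSet * (#{f : V → W | G ≤ monochromaticGraph f} : ℤ) := by
        simp only [chromaticPolynomial, eval_finsetSum, eval_monomial,
          card_filter_le_monochromaticGraph, Nat.cast_pow]
    _ = ∑ G : SimpleGraph V with G ≤ H, ∑ f : V → W with G ≤ monochromaticGraph f,
          (-1) ^ Nat.card G.edgeSet := by
        simp only [sum_const, nsmul_eq_mul, mul_comm]
    _ = ∑ f : V → W, ∑ G : SimpleGraph V with G ≤ H ⊓ monochromaticGraph f,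
          (-1) ^ Nat.card G.edgeSet := by
        exact sum_comm' fun _ _ => by simp only [mem_filter_univ, mem_univ, le_inf_iff, and_true]
    _ = ∑ f : V → W, if Disjoint H (monochromaticGraph f) then 1 else 0 := by
        simp only [sum_neg_one_pow_card_edgeSet_of_le, disjoint_iff]
    _ = Nat.card (H.Coloring W) := by
        rw [sum_boole, card_filter_disjoint_monochromaticGraph]

lemma chromaticPolynomial_top :
    chromaticPolynomial (⊤ : SimpleGraph V) = descPochhammer ℤ (Fintype.card V) := by
  refine eq_of_infinite_eval_eq _ _ ?_
  refine (Set.infinite_range_of_injective (Nat.cast_injective (R := ℤ))).mono ?_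
  rintro _ ⟨q, rfl⟩
  have heval := eval_chromaticPolynomial (W := Fin q) (⊤ : SimpleGraph V)
  rwa [card_coloring_top, Fintype.card_fin, ← descPochhammer_eval_eq_descFactorial] at heval

lemma coeff_one_chromaticPolynomial (H : SimpleGraph V) :
    (chromaticPolynomial H).coeff 1 =
      ∑ G : SimpleGraph V with G ≤ H ∧ G.Connected, (-1) ^ Nat.card G.edgeSet := by
  simp only [chromaticPolynomial, finsetSum_coeff, coeff_monomial, ← filter_filter,
    sum_filter (s := filter _ _), connected_iff_card_connectedComponent_eq_one]

end ChromaticPolynomial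

theorem sign_sum_connected_graphs_general [Fintype V] [Nonempty V] :
    ∑ G : SimpleGraph V with G.Connected, (-1 : ℤ) ^ Nat.card G.edgeSet =
      (-1) ^ (Fintype.card V - 1) * ((Fintype.card V - 1).factorial : ℤ) := by
  have hcoeff := coeff_one_chromaticPolynomial (⊤ : SimpleGraph V)
  simp only [le_top, true_and] at hcoeff
  rw [← hcoeff, chromaticPolynomial_top, ← coeff_one_descPochhammer_succ,
    Nat.sub_add_cancel Fintype.card_pos]

/-- For `k ≥ 1`, the sum of `(-1)^{e(G)}` over all connected simple
graphs `G` on the vertex set `Fin k` equals `(-1)^{k-1} · (k-1)!`. -/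
theorem sign_sum_connected_graphs (k : ℕ) (hk : 1 ≤ k) :
    ∑ G ∈ Finset.univ.filter (fun G : SimpleGraph (Fin k) => G.Connected),
        (-1 : ℤ) ^ (Nat.card G.edgeSet) =
      (-1 : ℤ) ^ (k - 1) * (Nat.factorial (k - 1) : ℤ) := by
  have : Nonempty (Fin k) := ⟨⟨0, hk⟩⟩
  convert sign_sum_connected_graphs_general (V := Fin k) <;> exact (Fintype.card_fin k).symm
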